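/- Suppose d | e | q^r−1 with gcd(d, e/d) = 1, and |S(A,χ)| ≤ K for every nontrivial multiplicative character χ of order dividing q^r−1. Then |N(e,A) − ρ(e/d)·N(d,A)| ≤ ρ(e)·(W(e) − W(d))·K. -/

import Mathlib

/-- γ is `e`-free: γ = β^d with d ∣ e implies d = 1. -/
def IsFreeElt {F : Type*} [Field F] (e : ℕ) (γ : Fˣ) : Prop :=
  ∀ (β : Fˣ) (d : ℕ), d ∣ e → γ = β ^ d → d = 1

/-- The number of `e`-free elements of `A`. -/
noncomputable def nFree {F : Type*} [Field F] (e : ℕ) (A : Set Fˣ) : ℕ :=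
  {γ ∈ A | IsFreeElt e γ}.ncard

namespace FreeAux

open Finset

lemma isFree_iff {F : Type*} [Field F] {e : ℕ} (he : e ≠ 0) (γ : Fˣ) :
    IsFreeElt e γ ↔ ∀ p ∈ e.primeFactors, ¬ ∃ β : Fˣ, γ = β ^ p := by
  constructor
  · rintro h p hp ⟨β, hβ⟩
    exact (Nat.prime_of_mem_primeFactors hp).ne_one
      (h β p (Nat.dvd_of_mem_primeFactors hp) hβ)
  · intro h β k hk hβ
    by_contra hne
    obtain ⟨p, hp, hpk⟩ := Nat.exists_prime_and_dvd hne
    refine h p (Nat.mem_primeFactors.2 ⟨hp, hpk.trans hk, he⟩) ⟨β ^ (k / p), ?_⟩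
    rw [← pow_mul, Nat.div_mul_cancel hpk, hβ]

lemma char_eq_one_iff {F : Type*} [Field F] [Fintype F] {p : ℕ} (hp : p.Prime)
    (χ : MulChar F ℂ) (hχ : orderOf χ = p) (γ : Fˣ) :
    χ (γ : F) = 1 ↔ ∃ β : Fˣ, γ = β ^ p := by
  have hpow : ∀ β : Fˣ, χ (β : F) ^ p = 1 := by
    intro β
    rw [← MulChar.pow_apply_coe, ← hχ, pow_orderOf_eq_one, MulChar.one_apply_coe]
  constructor
  · intro h
    obtain ⟨g, hg⟩ := IsCyclic.exists_generator (α := Fˣ)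
    have hg1 : χ (g : F) ≠ 1 := by
      intro h1
      have : χ = 1 := by
        ext u
        obtain ⟨k, rfl⟩ := (mem_powers_iff_mem_zpowers.2 (hg u))
        simp [h1]
      rw [this, orderOf_one] at hχ
      exact hp.ne_one hχ.symm
    have hord : orderOf (χ (g : F)) = p := by
      haveI := Fact.mk hp
      exact orderOf_eq_prime (hpow g) hg1
    obtain ⟨k, rfl⟩ := (mem_powers_iff_mem_zpowers.2 (hg γ))
    have hk : χ (g : F) ^ k = 1 := by simpa using h
    have hd := orderOf_dvd_of_pow_eq_one hk
    rw [hord] at hd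
    obtain ⟨m, rfl⟩ := hd
    exact ⟨g ^ m, by simp only [← pow_mul, mul_comm]⟩
  · rintro ⟨β, rfl⟩
    simpa using hpow β

/-- local factor -/
noncomputable def gf {F : Type*} [Field F] (χ : ℕ → MulChar F ℂ) (p : ℕ) (γ : Fˣ) : ℂ :=
  -(1 / ((p : ℂ) - 1)) * ∑ i ∈ Ico 1 p, (χ p (γ : F)) ^ i

open Classical in
lemma local_eq {F : Type*} [Field F] [Fintype F] {p : ℕ} (hp : p.Prime)
    (χ : ℕ → MulChar F ℂ) (hχ : orderOf (χ p) = p) (γ : Fˣ) :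
    (if (∃ β : Fˣ, γ = β ^ p) then (0 : ℂ) else 1) = (1 - (p : ℂ)⁻¹) * (1 + gf χ p γ) := by
  have hp0 : (p : ℂ) ≠ 0 := by exact_mod_cast hp.ne_zero
  have hp1 : (p : ℂ) - 1 ≠ 0 := by
    rw [sub_ne_zero]; exact_mod_cast hp.ne_one
  have hpow : χ p (γ : F) ^ p = 1 := by
    rw [← MulChar.pow_apply_coe]
    nth_rw 2 [← hχ]
    rw [pow_orderOf_eq_one, MulChar.one_apply_coe]
  have hsum : ∑ i ∈ range p, (χ p (γ : F)) ^ i = 1 + ∑ i ∈ Ico 1 p, (χ p (γ : F)) ^ i := by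
    rw [range_eq_Ico, sum_eq_sum_Ico_succ_bot hp.pos]; simp
  by_cases h : ∃ β : Fˣ, γ = β ^ p
  · rw [if_pos h]
    rw [← char_eq_one_iff hp (χ p) hχ γ] at h
    unfold gf
    simp only [h, one_pow, sum_const, Nat.card_Ico, nsmul_eq_mul, mul_one]
    rw [Nat.cast_sub hp.one_lt.le]
    push_cast
    field_simp
    ring
  · rw [if_neg h]
    rw [← char_eq_one_iff hp (χ p) hχ γ] at h
    have h0 : ∑ i ∈ range p, (χ p (γ : F)) ^ i = 0 := by
      have := mul_geom_sum (χ p (γ : F)) p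
      rw [hpow, sub_self] at this
      exact (mul_eq_zero.1 this).resolve_left (sub_ne_zero.2 h)
    have h1 : ∑ i ∈ Ico 1 p, (χ p (γ : F)) ^ i = -1 := by
      rw [h0] at hsum; linear_combination -hsum
    unfold gf
    rw [h1]
    field_simp
    ring

lemma bound {F : Type*} [Field F] [Fintype F] (χ : ℕ → MulChar F ℂ) (A : Finset Fˣ) (K : ℝ)
    (hK : ∀ ψ : MulChar F ℂ, ψ ≠ 1 → ‖∑ γ ∈ A, ψ (γ : F)‖ ≤ K) (T : Finset ℕ) :
    (∀ p ∈ T, p.Prime ∧ orderOf (χ p) = p) → ∀ (ψ : MulChar F ℂ) (M : ℕ), ψ ^ M = 1 →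
    (∀ p ∈ T, Nat.Coprime p M) → (ψ ≠ 1 ∨ T.Nonempty) →
    ‖∑ γ ∈ A, ψ (γ : F) * ∏ p ∈ T, gf χ p γ‖ ≤ K := by
  induction T using Finset.induction_on with
  | empty =>
    intro _ ψ M _ _ h
    simpa using hK ψ (by simpa using h)
  | insert p T hpT ih =>
    intro hT ψ M hψ hM _
    obtain ⟨hp, hχ⟩ := hT p (mem_insert_self _ _)
    have hp1 : (0 : ℝ) < (p : ℝ) - 1 := by
      rw [sub_pos]; exact_mod_cast hp.one_lt
    have key : ∑ γ ∈ A, ψ (γ : F) * ∏ p ∈ insert p T, gf χ p γ =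
        -(1 / ((p : ℂ) - 1)) * ∑ i ∈ Ico 1 p,
          ∑ γ ∈ A, (ψ * χ p ^ i) (γ : F) * ∏ p ∈ T, gf χ p γ := by
      rw [sum_comm, mul_sum]
      refine sum_congr rfl fun γ _ => ?_
      rw [prod_insert hpT]
      conv_lhs => rw [gf]
      simp only [MulChar.mul_apply, MulChar.pow_apply_coe]
      rw [← sum_mul, ← mul_sum]
      ring
    have hb : ‖∑ i ∈ Ico 1 p,
          ∑ γ ∈ A, (ψ * χ p ^ i) (γ : F) * ∏ p ∈ T, gf χ p γ‖ ≤ ∑ i ∈ Ico 1 p, K := by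
      refine norm_sum_le_of_le _ fun i hi => ?_
      rw [mem_Ico] at hi
      refine ih (fun p' hp' => hT p' (mem_insert_of_mem hp')) _ (M * p) ?_ ?_ (Or.inl ?_)
      · have hχp : χ p ^ p = 1 := by
          nth_rw 2 [← hχ]
          exact pow_orderOf_eq_one _
        rw [mul_pow, pow_mul, hψ, one_pow, one_mul, ← pow_mul,
          show i * (M * p) = p * (i * M) by ring, pow_mul, hχp, one_pow]
      · intro p' hp'
        refine Nat.Coprime.mul_right (hM p' (mem_insert_of_mem hp')) ?_
        rw [Nat.coprime_primes (hT p' (mem_insert_of_mem hp')).1 hp]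
        rintro rfl
        exact hpT hp'
      · intro h
        have h2 : (χ p) ^ (i * M) = 1 := by
          have := congrArg (· ^ M) h
          simpa [mul_pow, hψ, ← pow_mul] using this
        have h3 := orderOf_dvd_of_pow_eq_one h2
        rw [hχ] at h3
        have h4 := (hM p (mem_insert_self _ _)).dvd_of_dvd_mul_right h3
        exact absurd (Nat.le_of_dvd (by omega) h4) (by omega)
    rw [key, norm_mul]
    have hn : ‖-(1 / ((p : ℂ) - 1))‖ = 1 / ((p : ℝ) - 1) := by
      rw [norm_neg, show (1 / ((p : ℂ) - 1)) = ((1 / ((p : ℝ) - 1) : ℝ) : ℂ) by push_cast; rfl,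
        Complex.norm_real, Real.norm_of_nonneg (by positivity)]
    rw [hn]
    refine (mul_le_mul_of_nonneg_left hb (by positivity)).trans ?_
    rw [sum_const, Nat.card_Ico, nsmul_eq_mul, Nat.cast_sub hp.one_lt.le]
    push_cast
    field_simp
    exact le_refl _

open Classical in
lemma count {F : Type*} [Field F] [Fintype F] (χ : ℕ → MulChar F ℂ) (A : Set Fˣ)
    {e : ℕ} (he : e ≠ 0) (hχ : ∀ p ∈ e.primeFactors, orderOf (χ p) = p) :
    (nFree e A : ℂ) = ((e.totient : ℝ) / (e : ℝ) : ℝ) *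
      ∑ T ∈ e.primeFactors.powerset, ∑ γ ∈ A.toFinset, ∏ p ∈ T, gf χ p γ := by
  have h1 : nFree e A = (A.toFinset.filter (fun γ => IsFreeElt e γ)).card := by
    unfold nFree
    rw [← Set.ncard_coe_finset]
    congr 1
    ext; simp
  have hrho : (((e.totient : ℝ) / (e : ℝ) : ℝ) : ℂ) = ∏ p ∈ e.primeFactors, (1 - (p : ℂ)⁻¹) := by
    have := congrArg (Rat.cast : ℚ → ℂ) (Nat.totient_eq_mul_prod_factors e)
    push_cast at this ⊢
    rw [this]
    have : (e : ℂ) ≠ 0 := by exact_mod_cast he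
    field_simp
  rw [h1, card_filter, hrho, sum_comm, mul_sum]
  push_cast
  refine sum_congr rfl fun γ _ => ?_
  rw [← prod_one_add, ← prod_mul_distrib]
  rw [prod_congr rfl fun p hp =>
    (local_eq (Nat.prime_of_mem_primeFactors hp) χ (hχ p hp) γ).symm]
  by_cases h : IsFreeElt e γ
  · rw [if_pos h]
    rw [isFree_iff he] at h
    exact (prod_eq_one fun p hp => if_neg (h p hp)).symm
  · rw [if_neg h]
    rw [isFree_iff he] at h
    push Not at h
    obtain ⟨p, hp, hb⟩ := h
    symm
    apply prod_eq_zero hp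
    exact if_pos hb

end FreeAux

theorem stmt_3 (q r : ℕ) (hq : IsPrimePow q) (hr : 1 ≤ r)
    (F : Type*) [Field F] [Fintype F] (hF : Fintype.card F = q ^ r)
    (A : Set Fˣ) (d e : ℕ) (hde : d ∣ e) (he : e ∣ q ^ r - 1)
    (hcop : Nat.Coprime d (e / d)) (K : ℝ)
    (hK : ∀ χ : MulChar F ℂ, χ ≠ 1 → orderOf χ ∣ q ^ r - 1 →
      ‖∑ᶠ γ ∈ A, χ (γ : F)‖ ≤ K) :
    |(nFree e A : ℝ) - ((e / d).totient : ℝ) / ((e / d : ℕ) : ℝ) * (nFree d A : ℝ)| ≤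
      (e.totient : ℝ) / (e : ℝ) *
        ((2 : ℝ) ^ e.primeFactors.card - (2 : ℝ) ^ d.primeFactors.card) * K := by
  classical
  have hn : q ^ r - 1 ≠ 0 := by
    have := Fintype.one_lt_card (α := F)
    omega
  have he0 : e ≠ 0 := by rintro rfl; exact hn (zero_dvd_iff.1 he)
  have hd0 : d ≠ 0 := by rintro rfl; exact he0 (zero_dvd_iff.1 hde)
  have hex : ∀ p : ℕ, ∃ χ : MulChar F ℂ, p ∈ e.primeFactors → orderOf χ = p := by
    intro p
    by_cases hp : p ∈ e.primeFactors
    · have hdv : p ∣ Fintype.card F - 1 := by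
        rw [hF]; exact (Nat.dvd_of_mem_primeFactors hp).trans he
      have hp0 : p ≠ 0 := (Nat.prime_of_mem_primeFactors hp).ne_zero
      obtain ⟨χ, hχ⟩ := MulChar.exists_mulChar_orderOf F hdv
        (Complex.isPrimitiveRoot_exp p hp0)
      exact ⟨χ, fun _ => hχ⟩
    · exact ⟨1, fun h => absurd h hp⟩
  choose χ hχ using hex
  have hK' : ∀ ψ : MulChar F ℂ, ψ ≠ 1 → ‖∑ γ ∈ A.toFinset, ψ (γ : F)‖ ≤ K := by
    intro ψ hψ
    have h := hK ψ hψ (by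
      rw [← hF, ← Fintype.card_units]
      exact orderOf_dvd_of_pow_eq_one (MulChar.pow_card_eq_one ψ))
    rwa [finsum_mem_eq_toFinset_sum] at h
  have hsub : d.primeFactors ⊆ e.primeFactors := Nat.primeFactors_mono hde he0
  have hCe := FreeAux.count χ A he0 hχ
  have hCd := FreeAux.count χ A hd0 (fun p hp => hχ p (hsub hp))
  set S : Finset ℕ → ℂ := fun T => ∑ γ ∈ A.toFinset, ∏ p ∈ T, FreeAux.gf χ p γ with hS
  have hrho : ((e / d).totient : ℝ) / ((e / d : ℕ) : ℝ) * ((d.totient : ℝ) / (d : ℝ)) =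
      (e.totient : ℝ) / (e : ℝ) := by
    have h1 : d * (e / d) = e := Nat.mul_div_cancel' hde
    have h2 := Nat.totient_mul hcop
    rw [h1] at h2
    rw [h2]
    nth_rw 4 [← h1]
    push_cast
    rw [div_mul_div_comm, mul_comm, mul_comm ((e / d : ℕ) : ℝ)]
  have hps : d.primeFactors.powerset ⊆ e.primeFactors.powerset :=
    Finset.powerset_mono.2 hsub
  have hdiff : (((nFree e A : ℝ) - ((e / d).totient : ℝ) / ((e / d : ℕ) : ℝ) * (nFree d A : ℝ) : ℝ) : ℂ)
      = ((e.totient : ℝ) / (e : ℝ) : ℝ) *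
        ∑ T ∈ e.primeFactors.powerset \ d.primeFactors.powerset, S T := by
    rw [Complex.ofReal_sub, Complex.ofReal_mul, Complex.ofReal_natCast, Complex.ofReal_natCast,
      hCe, hCd, ← mul_assoc, ← Complex.ofReal_mul, hrho, ← mul_sub]
    congr 1
    rw [← Finset.sum_sdiff hps]
    simp [hS]
  rw [← Real.norm_eq_abs, ← Complex.norm_real, hdiff, norm_mul, Complex.norm_real,
    Real.norm_of_nonneg (by positivity), mul_assoc]
  refine mul_le_mul_of_nonneg_left ?_ (by positivity)
  have hcard : ((e.primeFactors.powerset \ d.primeFactors.powerset).card : ℝ) =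
      (2 : ℝ) ^ e.primeFactors.card - (2 : ℝ) ^ d.primeFactors.card := by
    rw [Finset.cast_card_sdiff hps, Finset.card_powerset, Finset.card_powerset]
    push_cast
    rfl
  rw [← hcard, ← nsmul_eq_mul, ← Finset.sum_const]
  refine norm_sum_le_of_le _ fun T hT => ?_
  rw [Finset.mem_sdiff, Finset.mem_powerset, Finset.mem_powerset] at hT
  have hne : T.Nonempty := by
    rw [Finset.nonempty_iff_ne_empty]
    rintro rfl
    exact hT.2 (Finset.empty_subset _)
  have := FreeAux.bound χ A.toFinset K hK' T
    (fun p hp => ⟨Nat.prime_of_mem_primeFactors (hT.1 hp), hχ p (hT.1 hp)⟩) 1 1 (by simp)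
    (fun p _ => by simp) (Or.inr hne)
  simpa [hS] using this
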